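/- Small-noise expansion of the absorbing-corrupted marginal (Lemma B.2). Fix x ∈ X̄. If x is compatible with D, then d(x,D) equals the number of masked coordinates of x, and there exist constants C > 0 and σ₀ ∈ (0,1) such that for all σ ∈ (0,σ₀): |q̄_σ(x) − p_data(proj_D(x)) · σ^{d(x,D)}| ≤ C · σ^{d(x,D)+1}. If x is not compatible with D, then q̄_σ(x) = 0 for every σ ∈ [0,1]. -/

import Mathlib

open scoped Classical

/-- Absorbing-corrupted marginal `q̄_σ(x) = Σ_{x0 ∈ D} p(x0) ∏_i ((1−σ)1{x^i=x0^i} + σ1{x^i=m})`,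
where the mask is `none : Option (Fin K)` and `p` is a distribution on clean strings
(summing over all clean strings is the same as summing over `D = supp p` since
off-support terms vanish). -/
noncomputable def qAbs (K H : ℕ) (p : (Fin H → Fin K) → ℝ) (σ : ℝ)
    (x : Fin H → Option (Fin K)) : ℝ :=
  ∑ x0 : Fin H → Fin K, p x0 *
    ∏ i : Fin H, ((1 - σ) * (if x i = some (x0 i) then (1 : ℝ) else 0)
      + σ * (if x i = none then (1 : ℝ) else 0))

/-- Hamming distance from `x ∈ X̄` to the (embedded) support `D` of `p`. -/
noncomputable def distSuppAbs (K H : ℕ) (p : (Fin H → Fin K) → ℝ)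
    (x : Fin H → Option (Fin K)) : ℕ :=
  sInf {n : ℕ | ∃ z : Fin H → Fin K, p z ≠ 0 ∧
    hammingDist x (fun i => (some (z i) : Option (Fin K))) = n}

/-- Total `p`-mass of the nearest in-support strings to `x ∈ X̄`. -/
noncomputable def projMassAbs (K H : ℕ) (p : (Fin H → Fin K) → ℝ)
    (x : Fin H → Option (Fin K)) : ℝ :=
  ∑ z ∈ Finset.univ.filter
      (fun z : Fin H → Fin K => p z ≠ 0 ∧
        hammingDist x (fun i => (some (z i) : Option (Fin K))) = distSuppAbs K H p x), p z

/-- `x ∈ X̄` is compatible with `D` if some `x0 ∈ D` agrees with `x` on all unmasked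
coordinates. -/
def CompatAbs (K H : ℕ) (p : (Fin H → Fin K) → ℝ)
    (x : Fin H → Option (Fin K)) : Prop :=
  ∃ x0 : Fin H → Fin K, p x0 ≠ 0 ∧ ∀ i : Fin H, x i ≠ none → x i = some (x0 i)

/-!
For a clean string `z`, the factors of the corruption kernel are `σ` at the masked coordinates of
`x`, `1 - σ` where `x` and `z` agree, and `0` where `x` is unmasked and differs from `z`. So the
kernel is `σ ^ d * (1 - σ) ^ u` if `z` completes `x` and `0` otherwise, where `d` and `u` count the
masked and unmasked coordinates of `x`, and `q̄_σ(x) = P * (σ ^ d * (1 - σ) ^ u)`, where `P` is the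
mass of the completions of `x`.

A mask differs from every letter, so `d` is a lower bound for the distance from `x` to any clean
string, attained exactly at its completions. If some completion lies in `D`, then `d(x, D) = d` and
`proj_D(x)` consists of the completions in `D`, which have mass `P`; the error is bounded through
`|(1 - σ) ^ u - 1| ≤ u * σ`. If no completion lies in `D`, then `P = 0`.
-/

open scoped Finset

section Completions

variable {ι α : Type*} {x : ι → Option α} {z : ι → α}

/-- The clean string `z` completes the partially masked string `x` if it agrees with `x` at every
unmasked coordinate; `none` is the mask, as in `qAbs`. Thus `CompatAbs K H p x` says that `x` has a
completion in the support of `p`. -/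
def IsCompletion (x : ι → Option α) (z : ι → α) : Prop :=
  ∀ i, x i ≠ none → x i = some (z i)

/-- The total weight of the clean strings completing `x`. -/
noncomputable def completionMass [Fintype ι] [DecidableEq ι] [Fintype α]
    {R : Type*} [AddCommMonoid R] (p : (ι → α) → R) (x : ι → Option α) : R :=
  ∑ z with IsCompletion x z, p z

theorem isCompletion_iff_filter_eq_empty [Fintype ι] [DecidableEq α] :
    IsCompletion x z ↔ ({i | x i ≠ none ∧ x i ≠ some (z i)} : Finset ι) = ∅ := by
  simp [IsCompletion, Finset.filter_eq_empty_iff]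

theorem hammingDist_some_eq_card_masked_add [Fintype ι] [DecidableEq α]
    (x : ι → Option α) (z : ι → α) :
    hammingDist x (fun i => some (z i)) =
      #{i | x i = none} + #{i | x i ≠ none ∧ x i ≠ some (z i)} := by
  rw [hammingDist, ← Finset.card_filter_add_card_filter_not (fun i => x i = none),
    Finset.filter_filter, Finset.filter_filter]
  congr 2 <;> grind

theorem card_masked_le_hammingDist_some [Fintype ι] [DecidableEq α]
    (x : ι → Option α) (z : ι → α) :
    #{i | x i = none} ≤ hammingDist x (fun i => some (z i)) := by
  rw [hammingDist_some_eq_card_masked_add]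
  exact Nat.le_add_right _ _

theorem hammingDist_some_eq_card_masked_iff [Fintype ι] [DecidableEq α] :
    hammingDist x (fun i => some (z i)) = #{i | x i = none} ↔ IsCompletion x z := by
  rw [hammingDist_some_eq_card_masked_add, Nat.add_eq_left, Finset.card_eq_zero,
    isCompletion_iff_filter_eq_empty]

theorem prod_absorbing_kernel_of_isCompletion [Fintype ι] [DecidableEq α]
    {R : Type*} [CommSemiring R] (a b : R) (h : IsCompletion x z) :
    ∏ i, (a * (if x i = some (z i) then 1 else 0) + b * (if x i = none then 1 else 0)) =
      b ^ #{i | x i = none} * a ^ #{i | x i ≠ none} := by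
  have factor_eq (i : ι) :
      a * (if x i = some (z i) then 1 else 0) + b * (if x i = none then 1 else 0) =
        if x i = none then b else a := by
    by_cases hi : x i = none
    · simp [hi]
    · simp [h i hi]
  simp only [factor_eq, Finset.prod_ite, Finset.prod_const, ne_eq]

theorem prod_absorbing_kernel_of_not_isCompletion [Fintype ι] [DecidableEq α]
    {R : Type*} [CommSemiring R] (a b : R) (h : ¬ IsCompletion x z) :
    ∏ i, (a * (if x i = some (z i) then 1 else 0) + b * (if x i = none then 1 else 0)) = 0 := by
  obtain ⟨i, hmask, hne⟩ : ∃ i, x i ≠ none ∧ x i ≠ some (z i) := by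
    simpa [IsCompletion] using h
  exact Finset.prod_eq_zero (Finset.mem_univ i) (by simp [hmask, hne])

theorem sum_mul_prod_absorbing_kernel [Fintype ι] [DecidableEq ι] [Fintype α] [DecidableEq α]
    {R : Type*} [CommSemiring R] (p : (ι → α) → R) (x : ι → Option α) (a b : R) :
    ∑ z, p z * ∏ i, (a * (if x i = some (z i) then 1 else 0) + b * (if x i = none then 1 else 0)) =
      completionMass p x * (b ^ #{i | x i = none} * a ^ #{i | x i ≠ none}) := by
  rw [completionMass, Finset.sum_mul, Finset.sum_filter]
  refine Finset.sum_congr rfl fun z _ => ?_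
  split_ifs with hz
  · rw [prod_absorbing_kernel_of_isCompletion a b hz]
  · rw [prod_absorbing_kernel_of_not_isCompletion a b hz, mul_zero]

end Completions

theorem abs_one_sub_pow_sub_one_le {R : Type*} [CommRing R] [LinearOrder R] [IsStrictOrderedRing R]
    {σ : R} (hσ : σ ∈ Set.Icc 0 2) (n : ℕ) : |(1 - σ) ^ n - 1| ≤ n * σ := by
  have abs_one_sub_le : |1 - σ| ≤ 1 := abs_le.2 ⟨by linarith [hσ.2], by linarith [hσ.1]⟩
  calc |(1 - σ) ^ n - 1|
      ≤ |1 - σ - 1| * n * max |1 - σ| |1| ^ (n - 1) := by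
        simpa only [one_pow] using abs_pow_sub_pow_le (1 - σ) 1 n
    _ = n * σ := by simp [abs_one_sub_le, abs_of_nonneg hσ.1, mul_comm]

section AbsorbingMarginal

variable {K H : ℕ} {p : (Fin H → Fin K) → ℝ} {x : Fin H → Option (Fin K)}

theorem qAbs_eq_completionMass_mul (p : (Fin H → Fin K) → ℝ) (σ : ℝ)
    (x : Fin H → Option (Fin K)) :
    qAbs K H p σ x =
      completionMass p x * (σ ^ #{i | x i = none} * (1 - σ) ^ #{i | x i ≠ none}) :=
  sum_mul_prod_absorbing_kernel p x (1 - σ) σ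

theorem completionMass_eq_zero_of_not_compatAbs (h : ¬ CompatAbs K H p x) :
    completionMass p x = 0 := by
  refine Finset.sum_eq_zero fun z hz => ?_
  by_contra hpz
  exact h ⟨z, hpz, (Finset.mem_filter.1 hz).2⟩

theorem distSuppAbs_eq_card_masked (h : CompatAbs K H p x) :
    distSuppAbs K H p x = #{i | x i = none} := by
  obtain ⟨x₀, hpx₀, hx₀⟩ := h
  have attained := hammingDist_some_eq_card_masked_iff.2 hx₀
  refine IsLeast.csInf_eq ⟨⟨x₀, hpx₀, attained⟩, ?_⟩
  rintro _ ⟨z, -, rfl⟩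
  exact card_masked_le_hammingDist_some x z

theorem projMassAbs_eq_completionMass (h : CompatAbs K H p x) :
    projMassAbs K H p x = completionMass p x := by
  simp only [projMassAbs, completionMass, distSuppAbs_eq_card_masked h,
    hammingDist_some_eq_card_masked_iff, and_comm (b := IsCompletion x _)]
  rw [← Finset.filter_filter]
  exact Finset.sum_filter_ne_zero _

theorem abs_qAbs_sub_completionMass_mul_le (p : (Fin H → Fin K) → ℝ) (x : Fin H → Option (Fin K))
    {σ : ℝ} (hσ : σ ∈ Set.Icc 0 2) :
    |qAbs K H p σ x - completionMass p x * σ ^ #{i | x i = none}| ≤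
      |completionMass p x| * #{i | x i ≠ none} * σ ^ (#{i | x i = none} + 1) := by
  have hσ₀ : 0 ≤ σ := hσ.1
  rw [qAbs_eq_completionMass_mul]
  set P := completionMass p x
  set d := #{i | x i = none}
  set u := #{i | x i ≠ none}
  calc |P * (σ ^ d * (1 - σ) ^ u) - P * σ ^ d|
      = |P| * σ ^ d * |(1 - σ) ^ u - 1| := by
        have factored : P * (σ ^ d * (1 - σ) ^ u) - P * σ ^ d =
            P * σ ^ d * ((1 - σ) ^ u - 1) := by ring
        rw [factored, abs_mul, abs_mul, abs_of_nonneg (pow_nonneg hσ₀ d)]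
    _ ≤ |P| * σ ^ d * (u * σ) := by gcongr; exact abs_one_sub_pow_sub_one_le hσ u
    _ = |P| * u * σ ^ (d + 1) := by ring

end AbsorbingMarginal

theorem absorbing_marginal_small_noise_expansion_general
    (K H : ℕ) (p : (Fin H → Fin K) → ℝ) (x : Fin H → Option (Fin K)) :
    (CompatAbs K H p x →
      distSuppAbs K H p x = #{i | x i = none} ∧
      ∃ C > (0 : ℝ), ∀ σ ∈ Set.Icc (0 : ℝ) 1,
        |qAbs K H p σ x - projMassAbs K H p x * σ ^ distSuppAbs K H p x|
          ≤ C * σ ^ (distSuppAbs K H p x + 1)) ∧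
    (¬ CompatAbs K H p x → ∀ σ : ℝ, qAbs K H p σ x = 0) := by
  refine ⟨fun h => ⟨distSuppAbs_eq_card_masked h, ?_⟩, fun h σ => ?_⟩
  · rw [distSuppAbs_eq_card_masked h, projMassAbs_eq_completionMass h]
    refine ⟨|completionMass p x| * #{i | x i ≠ none} + 1, by positivity, fun σ hσ => ?_⟩
    have hσ₀ : 0 ≤ σ := hσ.1
    refine (abs_qAbs_sub_completionMass_mul_le p x ⟨hσ₀, hσ.2.trans one_le_two⟩).trans ?_
    gcongr
    exact le_add_of_nonneg_right zero_le_one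
  · rw [qAbs_eq_completionMass_mul, completionMass_eq_zero_of_not_compatAbs h, zero_mul]

/-- Lemma B.2: small-noise expansion of the absorbing-corrupted marginal.
If `x` is compatible with `D` then `d(x,D)` equals the number of masked coordinates
and `|q̄_σ(x) − p(proj_D(x)) σ^{d(x,D)}| ≤ C σ^{d(x,D)+1}` for small `σ`; otherwise
`q̄_σ(x) = 0` for every `σ ∈ [0,1]`. -/
theorem absorbing_marginal_small_noise_expansion
    (K H : ℕ) (hK : 2 ≤ K) (hH : 1 ≤ H)
    (p : (Fin H → Fin K) → ℝ) (hp0 : ∀ v, 0 ≤ p v) (hp1 : ∑ v, p v = 1)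
    (x : Fin H → Option (Fin K)) :
    (CompatAbs K H p x →
      distSuppAbs K H p x = (Finset.univ.filter (fun i : Fin H => x i = none)).card ∧
      ∃ C > (0 : ℝ), ∃ σ₀ ∈ Set.Ioo (0 : ℝ) 1, ∀ σ ∈ Set.Ioo (0 : ℝ) σ₀,
        |qAbs K H p σ x - projMassAbs K H p x * σ ^ (distSuppAbs K H p x)|
          ≤ C * σ ^ (distSuppAbs K H p x + 1)) ∧
    (¬ CompatAbs K H p x → ∀ σ ∈ Set.Icc (0 : ℝ) 1, qAbs K H p σ x = 0) := by
  obtain ⟨compat, incompat⟩ := absorbing_marginal_small_noise_expansion_general K H p x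
  exact ⟨fun h => (compat h).imp_right fun ⟨C, hC, hbound⟩ => ⟨C, hC, 1 / 2, by norm_num,
    fun σ hσ => hbound σ ⟨hσ.1.le, by linarith [hσ.2]⟩⟩, fun h σ _ => incompat h σ⟩
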